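/- arXiv:0904.1158 — 3 statements merged into one kernel-verified Lean document; each statement's English description precedes it below -/
import Mathlib

section
/- For every splittable tuple i ∈ ℕ^n there exist strict partitions μ ⊆ λ such that the skew shifted Young diagram λ/μ has n cells, and a standard tableau T of shape λ/μ whose content sequence equals i. -/
/-- A strict partition: a strictly decreasing list of positive integers. -/
def StrictPartition (l : List ℕ) : Prop :=
  l.Chain' (· > ·) ∧ ∀ x ∈ l, 0 < x

/-- The shifted Young diagram of a strict partition (0-indexed):
row `r` consists of the cells `(r, j)` with `r ≤ j < r + λ_r`. -/
def shiftedCells (l : List ℕ) : Set (ℕ × ℕ) :=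
  {p : ℕ × ℕ | p.1 ≤ p.2 ∧ p.2 < p.1 + l.getD p.1 0}

/-- `D` is the cell set of a skew shifted Young diagram. -/
def IsSkewShifted (D : Set (ℕ × ℕ)) : Prop :=
  ∃ lam mu : List ℕ, StrictPartition lam ∧ StrictPartition mu ∧
    (∀ r, mu.getD r 0 ≤ lam.getD r 0) ∧ D = shiftedCells lam \ shiftedCells mu

/-- A standard tableau of shape `D` with `n` cells: a bijection from `{1,…,n}`
(i.e. `Fin n`) onto `D` whose labels increase along rows and down columns. -/
def IsStandard {n : ℕ} (D : Set (ℕ × ℕ)) (T : Fin n → ℕ × ℕ) : Prop :=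
  Function.Injective T ∧ Set.range T = D ∧
  (∀ k l : Fin n, (T l).1 = (T k).1 → (T l).2 = (T k).2 + 1 → k < l) ∧
  (∀ k l : Fin n, (T l).1 = (T k).1 + 1 → (T l).2 = (T k).2 → k < l)

/-- The content sequence of a tableau: the content `j − r` of the cell labeled `k`. -/
def contentSeq {n : ℕ} (T : Fin n → ℕ × ℕ) : Fin n → ℕ := fun k => (T k).2 - (T k).1

/-- A tuple `i ∈ ℕ^n` is splittable if whenever `i k = i l` with `k < l`:
if the common value is `0` then `1` occurs strictly between, and if it is `≥ 1`
then both the value minus one and the value plus one occur strictly between. -/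
def Splittable {n : ℕ} (i : Fin n → ℕ) : Prop :=
  ∀ k l : Fin n, k < l → i k = i l →
    (i k = 0 → ∃ a, k < a ∧ a < l ∧ i a = 1) ∧
    (1 ≤ i k → (∃ a, k < a ∧ a < l ∧ i a + 1 = i k) ∧ (∃ a, k < a ∧ a < l ∧ i a = i k + 1))

/-- `j` is obtained from `i` by one admissible simple transposition. -/
def AdmissibleSwap {n : ℕ} (i j : Fin n → ℕ) : Prop :=
  ∃ (k : ℕ) (hk : k + 1 < n),
    i ⟨k, Nat.lt_of_succ_lt hk⟩ ≠ i ⟨k + 1, hk⟩ + 1 ∧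
    i ⟨k + 1, hk⟩ ≠ i ⟨k, Nat.lt_of_succ_lt hk⟩ + 1 ∧
    j = i ∘ Equiv.swap ⟨k, Nat.lt_of_succ_lt hk⟩ ⟨k + 1, hk⟩

/-- Equivalence of tuples under finite chains of admissible transpositions. -/
def EquivTuples {n : ℕ} (i j : Fin n → ℕ) : Prop :=
  Relation.ReflTransGen AdmissibleSwap i j

/-!
Read a strict partition through its set of parts. A cell of content `k` can be added exactly when
`k + 1` is not a part and `k` is a part or `0`, and adding it replaces the part `k` by `k + 1`.
A tuple is a content sequence of shape `λ/μ` when its entries can be added to `μ` in this way one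
after the other. Between two equal entries `k`, splittability forces `k + 1` to occur, which
removes the part `k + 1`, and for `k > 0` also `k - 1`, which recreates the part `k`. Hence only
entries that are not preceded by a suitable entry constrain `μ`, and it suffices to take as parts of
`μ` the positive values `v` whose first occurrence is not preceded by `v - 1`.
-/

section StrictPartition

variable {a k r s : ℕ} {l : List ℕ}

lemma strictPartition_iff_pairwise :
    StrictPartition l ↔ l.Pairwise (· > ·) ∧ ∀ x ∈ l, 0 < x :=
  and_congr_left' List.isChain_iff_pairwise

lemma strictPartition_cons :
    StrictPartition (a :: l) ↔ 0 < a ∧ (∀ b ∈ l, b < a) ∧ StrictPartition l := by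
  simp only [strictPartition_iff_pairwise, List.pairwise_cons, List.forall_mem_cons]
  tauto

lemma strictPartition_sort {A : Finset ℕ} (hA : ∀ x ∈ A, 0 < x) :
    StrictPartition (A.sort (· ≥ ·)) :=
  strictPartition_iff_pairwise.2
    ⟨A.sortedGT_sort.pairwise, fun x hx => hA x ((A.mem_sort _).1 hx)⟩

lemma StrictPartition.nodup (hl : StrictPartition l) : l.Nodup :=
  (strictPartition_iff_pairwise.1 hl).1.imp ne_of_gt

lemma StrictPartition.add_getD_le (hl : StrictPartition l) (hrs : r ≤ s) (hs : s < l.length) :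
    s + l.getD s 0 ≤ r + l.getD r 0 := by
  induction s, hrs using Nat.le_induction with
  | base => exact le_rfl
  | succ s _ ih =>
    have hstep : l[s + 1] < l[s] := List.isChain_iff_getElem.1 hl.1 s hs
    have hprev := ih (by lia)
    rw [List.getD_eq_getElem _ _ (by lia)] at hprev ⊢
    lia

end StrictPartition

section ShiftedCells

variable {l m : List ℕ} {p q : ℕ × ℕ}

lemma shiftedCells_subset_iff : shiftedCells l ⊆ shiftedCells m ↔ ∀ r, l.getD r 0 ≤ m.getD r 0 := by
  refine ⟨fun h r => ?_, fun h p hp => ⟨hp.1, hp.2.trans_le (by gcongr; exact h p.1)⟩⟩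
  by_contra! hlt
  have hmem : (r, r + m.getD r 0) ∈ shiftedCells l := ⟨by simp, by simpa using hlt⟩
  exact lt_irrefl _ (h hmem).2

lemma StrictPartition.mem_shiftedCells_of_le (hl : StrictPartition l) (hq : q ∈ shiftedCells l)
    (hpq : p ≤ q) (hp : p.1 ≤ p.2) : p ∈ shiftedCells l := by
  have hlen : q.1 < l.length := by
    by_contra! hle
    have hlt := hq.2
    rw [List.getD_eq_default _ _ hle] at hlt
    exact hlt.not_ge hq.1
  exact ⟨hp, (hpq.2.trans_lt hq.2).trans_le (hl.add_getD_le hpq.1 hlen)⟩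

end ShiftedCells

section AddCell

/-- The partition obtained from `l` by adding a cell of content `k`: the part `k` grows to `k + 1`.
If `k` is not a part of `l`, a new last part `k + 1` is appended, which is meant for `k = 0`. -/
def addCell (k : ℕ) : List ℕ → List ℕ
  | [] => [k + 1]
  | a :: l => if a = k then (k + 1) :: l else a :: addCell k l

variable {k x : ℕ} {l : List ℕ}

lemma mem_addCell (hl : l.Nodup) : x ∈ addCell k l ↔ x = k + 1 ∨ x ∈ l ∧ x ≠ k := by
  induction l with
  | nil => simp [addCell]
  | cons a l ih =>
    have hmem := ih hl.of_cons
    have ha : a ∉ l := hl.notMem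
    grind [addCell]

lemma getD_addCell (r : ℕ) :
    (addCell k l).getD r 0 = if r = l.idxOf k then k + 1 else l.getD r 0 := by
  induction l generalizing r with
  | nil => cases r <;> simp [addCell]
  | cons a l ih =>
    rcases eq_or_ne a k with rfl | hak <;> cases r <;> simp_all [addCell, List.idxOf_cons_ne]

lemma getD_idxOf (hk : k = 0 ∨ k ∈ l) : l.getD (l.idxOf k) 0 = k := by
  by_cases hmem : k ∈ l
  · rw [List.getD_eq_getElem _ _ (List.idxOf_lt_length_iff.2 hmem), List.getElem_idxOf]
  · rw [List.getD_eq_default _ _ (List.idxOf_eq_length hmem).ge, hk.resolve_right hmem]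

protected lemma StrictPartition.addCell (hl : StrictPartition l) (hsucc : k + 1 ∉ l)
    (hk : k = 0 ∨ k ∈ l) : StrictPartition (addCell k l) := by
  induction l with
  | nil => exact ⟨List.isChain_singleton _, by simp [addCell]⟩
  | cons a l ih =>
    obtain ⟨ha, hlt, htail⟩ := strictPartition_cons.1 hl
    obtain ⟨hne, hsucc'⟩ := not_or.1 (List.mem_cons.not.1 hsucc)
    rw [addCell]
    split_ifs with hak
    · exact strictPartition_cons.2 ⟨k.succ_pos, fun b hb => by have := hlt b hb; lia, htail⟩
    · have hk' : k = 0 ∨ k ∈ l := hk.imp_right (List.mem_of_ne_of_mem (Ne.symm hak))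
      have hka : k < a := hk'.elim (fun h => h ▸ ha) (hlt k)
      refine strictPartition_cons.2 ⟨ha, fun b hb => ?_, ih htail hsucc' hk'⟩
      rcases (mem_addCell htail.nodup).1 hb with rfl | ⟨hbl, -⟩
      · lia
      · exact hlt b hbl

lemma notMem_shiftedCells_idxOf (hk : k = 0 ∨ k ∈ l) :
    (l.idxOf k, l.idxOf k + k) ∉ shiftedCells l := by
  simp only [shiftedCells, Set.mem_ofPred_eq, getD_idxOf hk, lt_irrefl, and_false,
    not_false_eq_true]

lemma shiftedCells_addCell (hk : k = 0 ∨ k ∈ l) :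
    shiftedCells (addCell k l) = insert (l.idxOf k, l.idxOf k + k) (shiftedCells l) := by
  ext ⟨r, j⟩
  simp only [shiftedCells, Set.mem_ofPred_eq, Set.mem_insert_iff, Prod.mk.injEq, getD_addCell]
  split_ifs with hr
  · subst hr
    rw [getD_idxOf hk]
    lia
  · lia

end AddCell

section Tableau

variable {n : ℕ} {T : Fin n → ℕ × ℕ}

lemma IsStandard.cons {D : Set (ℕ × ℕ)} (hT : IsStandard D T) {c : ℕ × ℕ} (hc : c ∉ D)
    (hleft : ∀ p ∈ D, c.1 = p.1 → c.2 ≠ p.2 + 1) (habove : ∀ p ∈ D, c.1 = p.1 + 1 → c.2 ≠ p.2) :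
    IsStandard (insert c D) (Fin.cons c T : Fin (n + 1) → ℕ × ℕ) := by
  obtain ⟨hinj, rfl, hrow, hcol⟩ := hT
  refine ⟨Fin.cons_injective_iff.2 ⟨hc, hinj⟩, Fin.range_cons c T, fun k l => ?_, fun k l => ?_⟩
  · cases k using Fin.cases <;> cases l using Fin.cases
    case zero.zero => simp
    case zero.succ l => exact fun _ _ => l.succ_pos
    case succ.zero k => exact fun h₁ h₂ => absurd h₂ (hleft _ ⟨k, rfl⟩ h₁)
    case succ.succ k l => exact fun h₁ h₂ => Fin.succ_lt_succ_iff.2 (hrow k l h₁ h₂)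
  · cases k using Fin.cases <;> cases l using Fin.cases
    case zero.zero => simp
    case zero.succ l => exact fun _ _ => l.succ_pos
    case succ.zero k => exact fun h₁ h₂ => absurd h₂ (habove _ ⟨k, rfl⟩ h₁)
    case succ.succ k l => exact fun h₁ h₂ => Fin.succ_lt_succ_iff.2 (hcol k l h₁ h₂)

lemma IsStandard.cons_skew {lam mu nu : List ℕ} {c : ℕ × ℕ} (hnu : StrictPartition nu)
    (hle : shiftedCells nu ⊆ shiftedCells lam)
    (hcell : shiftedCells nu = insert c (shiftedCells mu))
    (hc : c ∉ shiftedCells mu) (hT : IsStandard (shiftedCells lam \ shiftedCells nu) T) :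
    IsStandard (shiftedCells lam \ shiftedCells mu) (Fin.cons c T : Fin (n + 1) → ℕ × ℕ) := by
  have hcnu : c ∈ shiftedCells nu := hcell ▸ Set.mem_insert c _
  have hD : insert c (shiftedCells lam \ shiftedCells nu) = shiftedCells lam \ shiftedCells mu := by
    rw [hcell, Set.insert_sdiff_insert, Set.insert_eq_of_mem (Set.mem_sdiff_of_mem (hle hcnu) hc)]
  have hnot : ∀ p ∈ shiftedCells lam \ shiftedCells nu, ¬p ≤ c := fun p hp hpc =>
    hp.2 (hnu.mem_shiftedCells_of_le hcnu hpc hp.1.1)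
  exact hD ▸ hT.cons (fun h => h.2 hcnu)
    (fun p hp h₁ h₂ => hnot p hp ⟨h₁.ge, by lia⟩) (fun p hp h₁ h₂ => hnot p hp ⟨by lia, h₂.ge⟩)

lemma contentSeq_cons (r k : ℕ) :
    contentSeq (Fin.cons (r, r + k) T : Fin (n + 1) → ℕ × ℕ) = Fin.cons k (contentSeq T) := by
  ext a
  cases a using Fin.cases <;> simp [contentSeq]

end Tableau

section Splittable

variable {n : ℕ}

lemma Splittable.exists_succ_between {i : Fin n → ℕ} (hi : Splittable i) {k l : Fin n} (hkl : k < l)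
    (h : i k = i l) : ∃ a, k < a ∧ a < l ∧ i a = i k + 1 := by
  rcases Nat.eq_zero_or_pos (i k) with h₀ | hpos
  · simpa only [h₀] using (hi k l hkl h).1 h₀
  · exact ((hi k l hkl h).2 hpos).2

lemma Splittable.tail {i : Fin (n + 1) → ℕ} (hi : Splittable i) : Splittable (Fin.tail i) := by
  intro k l hkl h
  simpa [Fin.exists_fin_succ, Fin.tail] using hi k.succ l.succ (Fin.succ_lt_succ_iff.2 hkl) h

end Splittable

section Compatible

variable {n : ℕ} {l : List ℕ}

/-- The parts of `l` allow the entries of `i` to be added as contents of cells one after the other,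
at least if `i` is splittable. Adding `k` requires that `k + 1` is not a part and that `k` is a part
or `0`; each requirement is imposed on `l` only at an entry before which the part in question has
been neither created nor removed. -/
structure Compatible (l : List ℕ) (i : Fin n → ℕ) : Prop where
  succ_notMem : ∀ a, (∀ b < a, i b ≠ i a ∧ i b ≠ i a + 1) → i a + 1 ∉ l
  eq_zero_or_mem : ∀ a, (∀ b < a, i b ≠ i a ∧ i b + 1 ≠ i a) → i a = 0 ∨ i a ∈ l

lemma Compatible.succ_apply_zero_notMem {i : Fin (n + 1) → ℕ} (hc : Compatible l i) : i 0 + 1 ∉ l :=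
  hc.succ_notMem 0 fun b hb => absurd hb b.not_lt_zero

lemma Compatible.apply_zero_eq_zero_or_mem {i : Fin (n + 1) → ℕ} (hc : Compatible l i) :
    i 0 = 0 ∨ i 0 ∈ l :=
  hc.eq_zero_or_mem 0 fun b hb => absurd hb b.not_lt_zero

lemma Compatible.tail {i : Fin (n + 1) → ℕ} (hc : Compatible l i) (hl : l.Nodup)
    (hi : Splittable i) : Compatible (addCell (i 0) l) (Fin.tail i) where
  succ_notMem a ha := by
    have hne : i a.succ ≠ i 0 := fun h => by
      obtain ⟨b, hb₀, hba, hb⟩ := hi.exists_succ_between a.succ_pos h.symm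
      obtain ⟨b, rfl⟩ := Fin.exists_succ_eq.2 hb₀.ne'
      exact (ha b (Fin.succ_lt_succ_iff.1 hba)).2 (hb.trans (h ▸ rfl))
    rw [mem_addCell hl]
    rintro (h | ⟨hmem, hsucc⟩)
    · exact hne (Nat.succ_injective h)
    · refine hc.succ_notMem a.succ (fun b hb => ?_) hmem
      cases b using Fin.cases with
      | zero => exact ⟨hne.symm, hsucc.symm⟩
      | succ b => exact ha b (Fin.succ_lt_succ_iff.1 hb)
  eq_zero_or_mem a ha := by
    rw [mem_addCell hl]
    by_cases h : i a.succ = i 0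
    · refine Or.inl (Nat.eq_zero_of_not_pos fun hpos => ?_)
      obtain ⟨b, hb₀, hba, hb⟩ := ((hi 0 a.succ a.succ_pos h.symm).2 (h ▸ hpos)).1
      obtain ⟨b, rfl⟩ := Fin.exists_succ_eq.2 hb₀.ne'
      exact (ha b (Fin.succ_lt_succ_iff.1 hba)).2 (hb.trans h.symm)
    by_cases hsucc : i a.succ = i 0 + 1
    · exact Or.inr (Or.inl hsucc)
    refine (hc.eq_zero_or_mem a.succ fun b hb => ?_).imp_right fun hmem => Or.inr ⟨hmem, h⟩
    cases b using Fin.cases with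
    | zero => exact ⟨Ne.symm h, Ne.symm hsucc⟩
    | succ b => exact ha b (Fin.succ_lt_succ_iff.1 hb)

theorem Compatible.exists_isStandard {i : Fin n → ℕ} (hc : Compatible l i) (hl : StrictPartition l)
    (hi : Splittable i) :
    ∃ (lam : List ℕ) (T : Fin n → ℕ × ℕ), StrictPartition lam ∧
      shiftedCells l ⊆ shiftedCells lam ∧
      IsStandard (shiftedCells lam \ shiftedCells l) T ∧ contentSeq T = i := by
  induction n generalizing l with
  | zero =>
    exact ⟨l, Fin.elim0, hl, subset_rfl,
      ⟨fun a => a.elim0, by simp, fun a => a.elim0, fun a => a.elim0⟩, Subsingleton.elim _ _⟩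
  | succ n ih =>
    have hk := hc.apply_zero_eq_zero_or_mem
    have hnu := hl.addCell hc.succ_apply_zero_notMem hk
    have hcell := shiftedCells_addCell hk
    obtain ⟨lam, T, hlam, hle, hT, hcont⟩ := ih (hc.tail hl.nodup hi) hnu hi.tail
    refine ⟨lam, Fin.cons (l.idxOf (i 0), l.idxOf (i 0) + i 0) T, hlam, ?_, ?_, ?_⟩
    · exact (hcell ▸ Set.subset_insert _ _).trans hle
    · exact hT.cons_skew hnu hle hcell (notMem_shiftedCells_idxOf hk)
    · rw [contentSeq_cons, hcont, Fin.cons_self_tail]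

end Compatible

section InitialPartition

variable {n : ℕ} {i : Fin n → ℕ}

/-- The inner shape of a tableau with content sequence `i`: its parts are the positive values `v` of
`i` whose first occurrence is not preceded by `v - 1`. -/
def initialPartition (i : Fin n → ℕ) : List ℕ :=
  (({a | 0 < i a ∧ ∀ b < a, i b ≠ i a ∧ i b + 1 ≠ i a} : Finset (Fin n)).image i).sort (· ≥ ·)

lemma mem_initialPartition {v : ℕ} :
    v ∈ initialPartition i ↔ ∃ a, (0 < i a ∧ ∀ b < a, i b ≠ i a ∧ i b + 1 ≠ i a) ∧ i a = v := by
  simp only [initialPartition, Finset.mem_sort, Finset.mem_image, Finset.mem_filter_univ]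

lemma strictPartition_initialPartition (i : Fin n → ℕ) : StrictPartition (initialPartition i) := by
  refine strictPartition_sort fun v hv => ?_
  obtain ⟨a, ha, rfl⟩ := mem_initialPartition.1 ((Finset.mem_sort _).2 hv)
  exact ha.1

lemma compatible_initialPartition (i : Fin n → ℕ) : Compatible (initialPartition i) i where
  succ_notMem a ha hmem := by
    obtain ⟨b, ⟨-, hb⟩, hba⟩ := mem_initialPartition.1 hmem
    rcases lt_trichotomy a b with hlt | rfl | hgt
    · exact (hb a hlt).2 hba.symm
    · exact Nat.succ_ne_self _ hba.symm
    · exact (ha b hgt).2 hba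
  eq_zero_or_mem a ha :=
    (Nat.eq_zero_or_pos (i a)).imp_right fun hpos => mem_initialPartition.2 ⟨a, ⟨hpos, ha⟩, rfl⟩

end InitialPartition

/-- every splittable tuple is the content sequence of some standard
tableau of some skew shifted Young diagram with `n` cells. -/
theorem splittable_is_content_seq (n : ℕ) (i : Fin n → ℕ) (hi : Splittable i) :
    ∃ (lam mu : List ℕ) (T : Fin n → ℕ × ℕ),
      StrictPartition lam ∧ StrictPartition mu ∧
      (∀ r, mu.getD r 0 ≤ lam.getD r 0) ∧
      IsStandard (shiftedCells lam \ shiftedCells mu) T ∧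
      contentSeq T = i := by
  have hmu := strictPartition_initialPartition i
  obtain ⟨lam, T, hlam, hle, hT, hcont⟩ :=
    (compatible_initialPartition i).exists_isStandard hmu hi
  exact ⟨lam, initialPartition i, T, hlam, hmu, shiftedCells_subset_iff.1 hle, hT, hcont⟩
end

section
/- Let D be the cell set of a skew shifted Young diagram with n cells. If T and S are standard tableaux of shape D that have the same content sequence, then T = S. -/
/-!
Moving right and then down, one cell at a time, joins any two comparable cells of a skew shifted
diagram without leaving it, so a standard tableau is a linear extension of the componentwise order
on its shape. Cells of equal content lie on one diagonal, hence are comparable. At the first label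
`k` where `T` and `S` disagree, say `T k ≤ S k`: then `S` puts the cell `T k` at a label below `k`,
where `T` agrees with `S`, so `T` would use that cell twice.
-/

section ReflectsLE

variable {ι α : Type*} [PartialOrder ι] [Preorder α] {f g : ι → α}

theorem apply_eq_of_forall_lt_apply_eq (hf : ∀ ⦃a b⦄, f a ≤ f b → a ≤ b)
    (hg : ∀ ⦃a b⦄, g a ≤ g b → a ≤ b) {a : ι} (hmem : f a ∈ Set.range g)
    (heq : ∀ b < a, f b = g b) (hle : f a ≤ g a) : f a = g a := by
  obtain ⟨b, hb⟩ := hmem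
  obtain rfl | hba := (hg (hb.trans_le hle)).eq_or_lt
  · exact hb.symm
  · have hab : a ≤ b := hf ((heq b hba).trans hb).ge
    exact absurd hba hab.not_gt

theorem eq_of_reflects_le_of_forall_le_or_ge [WellFoundedLT ι] (hf : ∀ ⦃a b⦄, f a ≤ f b → a ≤ b)
    (hg : ∀ ⦃a b⦄, g a ≤ g b → a ≤ b) (hrange : Set.range f = Set.range g)
    (hfg : ∀ a, f a ≤ g a ∨ g a ≤ f a) : f = g := by
  funext a
  induction a using WellFoundedLT.induction with
  | ind a ih =>
    obtain hle | hge := hfg a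
    · exact apply_eq_of_forall_lt_apply_eq hf hg (hrange ▸ Set.mem_range_self a) ih hle
    · exact (apply_eq_of_forall_lt_apply_eq hg hf (hrange ▸ Set.mem_range_self a)
        (fun b hb ↦ (ih b hb).symm) hge).symm

end ReflectsLE

theorem le_or_ge_of_content_eq {p q : ℕ × ℕ} (hp : p.1 ≤ p.2) (hq : q.1 ≤ q.2)
    (h : p.2 - p.1 = q.2 - q.1) : p ≤ q ∨ q ≤ p := by
  simp only [Prod.le_def]
  omega

namespace StrictPartition

variable {l : List ℕ}

theorem getD_succ_lt (hl : StrictPartition l) {r : ℕ} (hr : 0 < l.getD (r + 1) 0) :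
    l.getD (r + 1) 0 < l.getD r 0 := by
  have hlen : r + 1 < l.length := by
    by_contra! hlen
    exact hr.ne' (List.getD_eq_default _ _ hlen)
  rw [List.getD_eq_getElem _ _ hlen, List.getD_eq_getElem _ _ (Nat.lt_of_succ_lt hlen)]
  exact List.isChain_iff_getElem.mp hl.1 r hlen

theorem add_getD_le_add_getD (hl : StrictPartition l) {r s : ℕ} (hrs : r ≤ s)
    (hs : 0 < l.getD s 0) : s + l.getD s 0 ≤ r + l.getD r 0 := by
  induction s, hrs using Nat.le_induction with
  | base => exact le_rfl
  | succ s _ ih =>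
    have hlt := hl.getD_succ_lt hs
    have hle := ih (hs.trans hlt)
    omega

theorem mem_shiftedCells_of_le_s2 (hl : StrictPartition l) {p q : ℕ × ℕ} (hp : p.1 ≤ p.2)
    (hpq : p ≤ q) (hq : q ∈ shiftedCells l) : p ∈ shiftedCells l := by
  obtain ⟨hq, hlt⟩ := hq
  have hend := hl.add_getD_le_add_getD hpq.1 (by omega)
  exact ⟨hp, (hpq.2.trans_lt hlt).trans_le hend⟩

end StrictPartition

namespace IsSkewShifted

variable {D : Set (ℕ × ℕ)}

theorem fst_le_snd (hD : IsSkewShifted D) {p : ℕ × ℕ} (hp : p ∈ D) : p.1 ≤ p.2 := by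
  obtain ⟨_, _, _, _, _, rfl⟩ := hD
  exact hp.1.1

theorem mem_of_mem_Icc (hD : IsSkewShifted D) {p q x : ℕ × ℕ} (hp : p ∈ D) (hq : q ∈ D)
    (hx : x ∈ Set.Icc p q) (hx' : x.1 ≤ x.2) : x ∈ D := by
  have hp' := hD.fst_le_snd hp
  obtain ⟨_, _, hlam, hmu, _, rfl⟩ := hD
  exact ⟨hlam.mem_shiftedCells_of_le_s2 hx' hx.2 hq.1,
    fun hxmu ↦ hp.2 (hmu.mem_shiftedCells_of_le_s2 hp' hx.1 hxmu)⟩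

theorem exists_adjacent_mem (hD : IsSkewShifted D) {p q : ℕ × ℕ} (hp : p ∈ D) (hq : q ∈ D)
    (hpq : p < q) : ∃ x ∈ D, x ≤ q ∧ (x = (p.1, p.2 + 1) ∨ x = (p.1 + 1, p.2)) := by
  have hp' := hD.fst_le_snd hp
  have hq' := hD.fst_le_snd hq
  obtain ⟨hfst, hsnd⟩ := hpq.le
  obtain hright | hsame := hsnd.lt_or_eq
  · have hle : (p.1, p.2 + 1) ≤ q := ⟨hfst, hright⟩
    have hge : p ≤ (p.1, p.2 + 1) := ⟨le_rfl, Nat.le_succ _⟩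
    exact ⟨_, hD.mem_of_mem_Icc hp hq ⟨hge, hle⟩ (Nat.le_succ_of_le hp'), hle, .inl rfl⟩
  · have hdown : p.1 < q.1 := hfst.lt_of_ne fun hfst ↦ hpq.ne (Prod.ext hfst hsame)
    have hle : (p.1 + 1, p.2) ≤ q := ⟨hdown, hsnd⟩
    have hge : p ≤ (p.1 + 1, p.2) := ⟨Nat.le_succ _, le_rfl⟩
    have hwedge : p.1 + 1 ≤ p.2 := hdown.trans_le (hq'.trans_eq hsame.symm)
    exact ⟨_, hD.mem_of_mem_Icc hp hq ⟨hge, hle⟩ hwedge, hle, .inr rfl⟩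

end IsSkewShifted

namespace IsStandard

variable {n : ℕ} {D : Set (ℕ × ℕ)} {T : Fin n → ℕ × ℕ}

theorem apply_mem (hT : IsStandard D T) (a : Fin n) : T a ∈ D :=
  hT.2.1 ▸ Set.mem_range_self a

theorem le_of_apply_le (hT : IsStandard D T) (hD : IsSkewShifted D) {a b : Fin n}
    (hab : T a ≤ T b) : a ≤ b := by
  have ⟨hinj, hrange, hrow, hcol⟩ := hT
  induction a using WellFoundedGT.induction with
  | ind a ih =>
    obtain heq | hlt := hab.eq_or_lt
    · exact (hinj heq).le
    obtain ⟨x, hx, hxb, hadj⟩ := hD.exists_adjacent_mem (hT.apply_mem a) (hT.apply_mem b) hlt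
    obtain ⟨c, rfl⟩ : x ∈ Set.range T := hrange ▸ hx
    have hac : a < c := by
      obtain hright | hdown := hadj
      · exact hrow a c (by rw [hright]) (by rw [hright])
      · exact hcol a c (by rw [hdown]) (by rw [hdown])
    exact hac.le.trans (ih c hac hxb)

end IsStandard

/-- a standard tableau of a skew shifted shape is determined by
its content sequence. -/
theorem standard_tableau_eq_of_content_seq_eq (n : ℕ) (D : Set (ℕ × ℕ))
    (hD : IsSkewShifted D) (T S : Fin n → ℕ × ℕ)
    (hT : IsStandard D T) (hS : IsStandard D S)
    (h : contentSeq T = contentSeq S) : T = S := by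
  have hcontent (k : Fin n) : (T k).2 - (T k).1 = (S k).2 - (S k).1 := congrFun h k
  refine eq_of_reflects_le_of_forall_le_or_ge (fun _ _ ↦ hT.le_of_apply_le hD)
    (fun _ _ ↦ hS.le_of_apply_le hD) (hT.2.1.trans hS.2.1.symm) fun k ↦ ?_
  exact le_or_ge_of_content_eq (hD.fst_le_snd (hT.apply_mem k)) (hD.fst_le_snd (hS.apply_mem k))
    (hcontent k)
end

section
/- Let i ∈ ℕ^n be a splittable tuple. Let P_i be the set of permutations τ in the symmetric group S_n that can be written as τ = s_{k_t}···s_{k_1} where, for each 1 ≤ l ≤ t, the simple transposition s_{k_l} is admissible with respect to s_{k_{l−1}}···s_{k_1}·i (for permutations, τ·i denotes the tuple (i_{τ^{−1}(1)},…,i_{τ^{−1}(n)})). Then the map τ ↦ τ·i is a bijection from P_i onto the equivalence class {j ∈ ℕ^n : j ∼ i}; in particular, if τ ∈ P_i satisfies τ·i = i then τ is the identity permutation. -/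
/-- The action `τ·i = (i_{τ⁻¹(1)},…,i_{τ⁻¹(n)})` of a permutation on a tuple. -/
def permAct {n : ℕ} (τ : Equiv.Perm (Fin n)) (i : Fin n → ℕ) : Fin n → ℕ :=
  i ∘ τ.symm

/-- The set `P_i` of permutations expressible as `s_{k_t}···s_{k_1}` where each
`s_{k_l}` is admissible with respect to `s_{k_{l-1}}···s_{k_1}·i`. -/
inductive InP {n : ℕ} (i : Fin n → ℕ) : Equiv.Perm (Fin n) → Prop
  | one : InP i 1
  | step (τ : Equiv.Perm (Fin n)) (k : ℕ) (hk : k + 1 < n) :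
      InP i τ →
      permAct τ i ⟨k, Nat.lt_of_succ_lt hk⟩ ≠ permAct τ i ⟨k + 1, hk⟩ + 1 →
      permAct τ i ⟨k + 1, hk⟩ ≠ permAct τ i ⟨k, Nat.lt_of_succ_lt hk⟩ + 1 →
      InP i (Equiv.swap ⟨k, Nat.lt_of_succ_lt hk⟩ ⟨k + 1, hk⟩ * τ)

/-!
A simple transposition reverses the relative order of only the two entries that it moves, and it is
admissible only if their values do not differ by one. So a permutation in `P_i` preserves the
relative order of any two entries whose values differ by one. If such a neighbouring value occurs
between any two equal entries, then equal entries keep their relative order as well, and a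
permutation that preserves the order on each fibre of `i` is determined by the tuple it produces.
-/

theorem swap_lt_swap_of_covBy {α : Type*} [LinearOrder α] {u v x y : α} (huv : u ⋖ v)
    (hxy : x < y) (hne : ¬(x = u ∧ y = v)) : Equiv.swap u v x < Equiv.swap u v y := by
  have below_u {z : α} (hz : z < v) : z ≤ u := huv.le_of_lt hz
  have above_v {z : α} (hz : u < z) : v ≤ z := huv.ge_of_gt hz
  have := huv.lt
  simp only [Equiv.swap_apply_def]
  grind

theorem equiv_eq_of_strictMonoOn_fibers {α β γ : Type*} [LinearOrder α] [WellFoundedLT α]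
    [Preorder γ] {f : α → β} {e₁ e₂ : α ≃ γ} (h₁ : ∀ b, StrictMonoOn e₁ (f ⁻¹' {b}))
    (h₂ : ∀ b, StrictMonoOn e₂ (f ⁻¹' {b})) (h : f ∘ e₁.symm = f ∘ e₂.symm) : e₁ = e₂ := by
  ext a
  let fiber := f ⁻¹' {f a}
  have range_eq : Set.range (fiber.domRestrict e₁) = Set.range (fiber.domRestrict e₂) := by
    rw [Set.range_domRestrict, Set.range_domRestrict, Equiv.image_eq_preimage_symm,
      Equiv.image_eq_preimage_symm, ← Set.preimage_comp, ← Set.preimage_comp, h]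
  have maps_eq : fiber.domRestrict e₁ = fiber.domRestrict e₂ :=
    ((h₁ (f a)).domRestrict.range_inj (h₂ (f a)).domRestrict).1 range_eq
  exact congrFun maps_eq ⟨a, rfl⟩

/-- Two values differing by one, which are those that an admissible transposition may not swap. -/
def Neighboring (x y : ℕ) : Prop :=
  x = y + 1 ∨ y = x + 1

/-- Between any two equal entries of the tuple lies an entry whose value differs from theirs by
one. This weakening of `Splittable` asks for a neighbouring value on one side only. -/
def Interlaced {n : ℕ} (i : Fin n → ℕ) : Prop :=
  ∀ a b, a < b → i a = i b → ∃ c, a < c ∧ c < b ∧ Neighboring (i a) (i c)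

section

variable {n : ℕ} {i : Fin n → ℕ}

theorem Neighboring.symm {x y : ℕ} (h : Neighboring x y) : Neighboring y x :=
  Or.symm h

theorem Splittable.interlaced (hi : Splittable i) : Interlaced i := by
  intro a b hab heq
  obtain ⟨h_zero, h_pos⟩ := hi a b hab heq
  rcases Nat.eq_zero_or_pos (i a) with ha | ha
  · obtain ⟨c, hac, hcb, hc⟩ := h_zero ha
    exact ⟨c, hac, hcb, .inr (by rw [hc, ha])⟩
  · obtain ⟨c, hac, hcb, hc⟩ := (h_pos ha).2
    exact ⟨c, hac, hcb, .inr hc⟩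

theorem InP.apply_lt_apply_of_neighboring {τ : Equiv.Perm (Fin n)} (hτ : InP i τ) {a b : Fin n}
    (hab : a < b) (h : Neighboring (i a) (i b)) : τ a < τ b := by
  induction hτ with
  | one => exact hab
  | step τ k hk _ hne hne' ih =>
    refine swap_lt_swap_of_covBy (by simp [Fin.covBy_iff]) ih fun ⟨ha, hb⟩ => ?_
    simp only [← ha, ← hb, permAct, Function.comp_apply, Equiv.symm_apply_apply] at hne hne'
    exact h.elim hne hne'

theorem InP.strictMonoOn_fiber {τ : Equiv.Perm (Fin n)} (hτ : InP i τ) (hi : Interlaced i)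
    (x : ℕ) : StrictMonoOn τ (i ⁻¹' {x}) := by
  intro a ha b hb hab
  have heq : i a = i b := ha.trans hb.symm
  obtain ⟨c, hac, hcb, hc⟩ := hi a b hab heq
  calc
    τ a < τ c := hτ.apply_lt_apply_of_neighboring hac hc
    _ < τ b := hτ.apply_lt_apply_of_neighboring hcb (heq ▸ hc.symm)

theorem Interlaced.injOn_permAct (hi : Interlaced i) :
    Set.InjOn (fun τ => permAct τ i) {τ | InP i τ} :=
  fun _ hτ _ hσ h =>
    equiv_eq_of_strictMonoOn_fibers (hτ.strictMonoOn_fiber hi) (hσ.strictMonoOn_fiber hi) h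

theorem permAct_swap_mul (τ : Equiv.Perm (Fin n)) (x y : Fin n) :
    permAct (Equiv.swap x y * τ) i = permAct τ i ∘ Equiv.swap x y := by
  rw [permAct, permAct, Equiv.Perm.mul_def, Equiv.symm_trans, Equiv.symm_swap, Equiv.coe_trans,
    Function.comp_assoc]

theorem InP.equivTuples_permAct {τ : Equiv.Perm (Fin n)} (hτ : InP i τ) :
    EquivTuples i (permAct τ i) := by
  induction hτ with
  | one => exact .refl
  | step τ k hk _ hne hne' ih => exact ih.tail ⟨k, hk, hne, hne', permAct_swap_mul τ _ _⟩

theorem EquivTuples.exists_inP_permAct_eq {j : Fin n → ℕ} (hj : EquivTuples i j) :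
    ∃ τ, InP i τ ∧ permAct τ i = j := by
  induction hj with
  | refl => exact ⟨1, .one, rfl⟩
  | tail _ hswap ih =>
    obtain ⟨τ, hτ, rfl⟩ := ih
    obtain ⟨k, hk, hne, hne', rfl⟩ := hswap
    exact ⟨_, .step τ k hk hτ hne hne', permAct_swap_mul τ _ _⟩

end

theorem permAct_bijOn_equiv_class_general {n : ℕ} (i : Fin n → ℕ) (hi : Interlaced i) :
    Set.BijOn (fun τ => permAct τ i) {τ : Equiv.Perm (Fin n) | InP i τ}
      {j : Fin n → ℕ | EquivTuples i j} ∧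
    ∀ τ : Equiv.Perm (Fin n), InP i τ → permAct τ i = i → τ = 1 :=
  ⟨⟨fun _ hτ => hτ.equivTuples_permAct, hi.injOn_permAct, fun _ hj => hj.exists_inP_permAct_eq⟩,
    fun _ hτ h => hi.injOn_permAct hτ .one h⟩

/-- for a splittable tuple `i`, the map `τ ↦ τ·i` is a bijection
from `P_i` onto the equivalence class of `i` under admissible transpositions;
in particular `τ·i = i` with `τ ∈ P_i` forces `τ = 1`. -/
theorem permAct_bijOn_equiv_class {n : ℕ} (i : Fin n → ℕ) (hi : Splittable i) :
    Set.BijOn (fun τ => permAct τ i) {τ : Equiv.Perm (Fin n) | InP i τ}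
      {j : Fin n → ℕ | EquivTuples i j} ∧
    ∀ τ : Equiv.Perm (Fin n), InP i τ → permAct τ i = i → τ = 1 :=
  permAct_bijOn_equiv_class_general i hi.interlaced
end
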